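/- Let Ω ⊆ ℂ^{m1×m2} be a nonempty bounded set (Frobenius norm), let M0 ∈ Ω, and let n be a positive integer with 2n > lower Minkowski dimension of Ω. Then for Lebesgue-almost all tuples a_1, …, a_n ∈ ℂ^{m1} and b_1, …, b_n ∈ ℂ^{m2}, any M ∈ Ω satisfying a_j* M (conj b_j) = a_j* M0 (conj b_j) for all j = 1, …, n must equal M0. (Weak identifiability of bounded-set matrix recovery from rank-one measurements.) -/

import Mathlib

/-!
The exceptional tuples are controlled by a union bound over a covering of `Ω` together with a
small-ball estimate for the measurement of a fixed matrix.

For `0 < t < 2` the function `‖z‖ ^ (-t)` is locally integrable on `ℂ`, so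
`∫ ‖conj z * v + w‖ ^ (-t)` over a disc is at most a constant times `‖v‖ ^ (-t)`, uniformly in `w`.
Applying this in the variables `b_j` and then `a_i` shows that the integral of
`|a* X (conj b)| ^ (-t)` over bounded `(a, b)` is `O(‖X_ij‖ ^ (-t))`
(`exists_lintegral_rankOneMeas_le`), and Markov's inequality bounds the volume of
`{|a* X (conj b)| ≤ δ}` by `O(δ ^ t)` when `‖X_ij‖` is bounded below (`measure_rankOneMeas_le`).
The `n` measurements being independent, the event that all are at most `δ` has volume `O(δ ^ (n t))`.

Choose `s` and `t` with `dim Ω < s < n t` and `t < 2`. For arbitrarily small `ρ`, at most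
`ρ ^ (-s)` balls of radius `ρ` cover `Ω`. If some `M` in such a ball has the same measurements as
`M0`, then every other point of the ball has measurements within `O(ρ)` of those of `M0`. Hence the
exceptional set has volume `O(ρ ^ (n t - s))`, which tends to `0` (`volume_bad_eq_zero`).
-/

open MeasureTheory Filter

/-- Covering number: the minimal number of closed balls of radius `ρ`
(with arbitrary centers) needed to cover `Ω`. -/
noncomputable def coveringNumber {X : Type*} [PseudoMetricSpace X] (Ω : Set X) (ρ : ℝ) : ℕ :=
  sInf {k : ℕ | ∃ C : Finset X, C.card = k ∧ Ω ⊆ ⋃ c ∈ C, Metric.closedBall c ρ}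

/-- Lower Minkowski dimension: `liminf_{ρ → 0⁺} log N_Ω(ρ) / log (1/ρ)`. -/
noncomputable def lowerMinkowskiDim {X : Type*} [PseudoMetricSpace X] (Ω : Set X) : ℝ :=
  Filter.liminf (fun ρ : ℝ => Real.log (coveringNumber Ω ρ) / Real.log (1 / ρ))
    (nhdsWithin 0 (Set.Ioi 0))

/-- The rank-one measurement `a* M (conj b) = ∑_{i,j} conj(a_i) M_{ij} conj(b_j)`. -/
noncomputable def rankOneMeas {m1 m2 : ℕ} (a : Fin m1 → ℂ) (b : Fin m2 → ℂ)
    (M : EuclideanSpace ℂ (Fin m1 × Fin m2)) : ℂ :=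
  ∑ i : Fin m1, ∑ j : Fin m2, (starRingEnd ℂ) (a i) * M (i, j) * (starRingEnd ℂ) (b j)

open scoped ENNReal

/-! ### Negative moments of the measurement -/

lemma lintegral_unitBall_rpow_lt_top {t : ℝ} (ht : t < 2) :
    ∫⁻ z in Metric.ball (0 : ℂ) 1, ‖z‖ₑ ^ (-t) < ⊤ := by
  have h : IntegrableOn (fun z : ℂ => ‖z‖ ^ (-t)) (Metric.ball 0 1) volume := by
    rw [integrableOn_fun_norm_addHaar volume (f := fun y : ℝ => y ^ (-t))]
    have : IntegrableOn (fun y : ℝ => y ^ (1 - t)) (Set.Ioo 0 1) := by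
      rw [intervalIntegral.integrableOn_Ioo_rpow_iff one_pos]; linarith
    refine this.congr_fun (fun y hy => ?_) measurableSet_Ioo
    simp only [Complex.finrank_real_complex, smul_eq_mul]
    rw [sub_eq_add_neg, Real.rpow_add hy.1]
    simp
  refine lt_of_eq_of_lt ?_ h.2
  refine lintegral_congr_ae (ae_restrict_of_ae ?_)
  filter_upwards [compl_mem_ae_iff.mpr (measure_singleton (0 : ℂ))] with z hz
  have hz' : 0 < ‖z‖ := norm_pos_iff.mpr hz
  rw [← ofReal_norm, ← ofReal_norm, ENNReal.ofReal_rpow_of_pos hz',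
    Real.norm_of_nonneg (by positivity)]

/-- A bound uniform in the translation `w`: the part of `S` where `‖z + w‖ ≥ 1` contributes at
most `volume S`. -/
lemma lintegral_rpow_add_le {t : ℝ} (ht : 0 < t) (S : Set ℂ) (w : ℂ) :
    ∫⁻ z in S, ‖z + w‖ₑ ^ (-t) ≤
      (∫⁻ z in Metric.ball (0 : ℂ) 1, ‖z‖ₑ ^ (-t)) + volume S := by
  have key : ∀ z : ℂ, ‖z + w‖ₑ ^ (-t) ≤
      (Metric.ball (0 : ℂ) 1).indicator (fun z => ‖z‖ₑ ^ (-t)) (z + w) + 1 := by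
    intro z
    by_cases h : z + w ∈ Metric.ball (0 : ℂ) 1
    · rw [Set.indicator_of_mem h]; exact le_self_add
    · rw [Set.indicator_of_notMem h, zero_add]
      refine ENNReal.rpow_le_one_of_one_le_of_neg ?_ (by linarith)
      rw [← ofReal_norm, ENNReal.one_le_ofReal]
      simpa using h
  calc ∫⁻ z in S, ‖z + w‖ₑ ^ (-t)
      ≤ ∫⁻ z in S, ((Metric.ball (0 : ℂ) 1).indicator (fun z => ‖z‖ₑ ^ (-t)) (z + w) + 1) :=
        lintegral_mono key
    _ = (∫⁻ z in S, (Metric.ball (0 : ℂ) 1).indicator (fun z => ‖z‖ₑ ^ (-t)) (z + w))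
          + volume S := by
        rw [lintegral_add_right _ measurable_const]; simp
    _ ≤ (∫⁻ z, (Metric.ball (0 : ℂ) 1).indicator (fun z => ‖z‖ₑ ^ (-t)) (z + w))
          + volume S := by
        gcongr; exact Measure.restrict_le_self
    _ = _ := by
        rw [lintegral_add_right_eq_self, lintegral_indicator measurableSet_ball]

/-- Restriction of Lebesgue measure to the closed disc of radius `R`. -/
noncomputable def discMeasure (R : ℝ) : Measure ℂ := volume.restrict (Metric.closedBall 0 R)

instance (R : ℝ) : IsFiniteMeasure (discMeasure R) := by
  refine ⟨?_⟩
  rw [discMeasure, Measure.restrict_apply_univ]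
  exact measure_closedBall_lt_top

/-- The negative moment of an affine function on a disc is controlled by its slope alone. For
`v = 0` the right-hand side is `⊤`, because `K ≠ 0`. -/
lemma exists_lintegral_affine_le {t : ℝ} (ht : 0 < t) (ht2 : t < 2) (R : ℝ) :
    ∃ K : ℝ≥0∞, K ≠ 0 ∧ K ≠ ⊤ ∧ ∀ v w : ℂ,
      ∫⁻ z, ‖(starRingEnd ℂ) z * v + w‖ₑ ^ (-t) ∂(discMeasure R) ≤ K * ‖v‖ₑ ^ (-t) := by
  refine ⟨(∫⁻ z in Metric.ball (0 : ℂ) 1, ‖z‖ₑ ^ (-t)) + volume (Metric.closedBall (0 : ℂ) R) + 1,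
    by simp, ?_, fun v w => ?_⟩
  · have := (lintegral_unitBall_rpow_lt_top ht2).ne
    have := (measure_closedBall_lt_top (μ := (volume : Measure ℂ)) (x := 0) (r := R)).ne
    simp only [ne_eq, ENNReal.add_eq_top, not_or]
    exact ⟨⟨‹_›, ‹_›⟩, ENNReal.one_ne_top⟩
  rcases eq_or_ne v 0 with rfl | hv
  · simp [ht]
  have : ∀ z : ℂ, ‖(starRingEnd ℂ) z * v + w‖ₑ ^ (-t) =
      ‖v‖ₑ ^ (-t) * ‖z + (starRingEnd ℂ) (w / v)‖ₑ ^ (-t) := by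
    intro z
    have e : (starRingEnd ℂ) z * v + w =
        v * (starRingEnd ℂ) (z + (starRingEnd ℂ) (w / v)) := by
      simp only [map_add, Complex.conj_conj]; field_simp
    rw [e, enorm_mul, ENNReal.mul_rpow_of_ne_top enorm_ne_top enorm_ne_top, RCLike.enorm_conj]
  simp_rw [this]
  rw [lintegral_const_mul _ (by fun_prop), mul_comm]
  gcongr
  exact (lintegral_rpow_add_le ht _ _).trans le_self_add

/-- A bound for the integral over one coordinate, uniform in the others, bounds the full integral. -/
lemma lintegral_pi_le_of_coord {ι : Type*} [Fintype ι] [DecidableEq ι] (R : ℝ)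
    (f : (ι → ℂ) → ℝ≥0∞) (hf : Measurable f) (i : ι) (c : ℝ≥0∞)
    (h : ∀ x, ∫⁻ z, f (Function.update x i z) ∂(discMeasure R) ≤ c) :
    ∫⁻ x, f x ∂(Measure.pi fun _ => discMeasure R) ≤
      c * discMeasure R Set.univ ^ (Fintype.card ι - 1) := by
  rw [lintegral_eq_lmarginal_univ (0 : ι → ℂ), lmarginal_erase' _ hf (Finset.mem_univ i)]
  refine (lmarginal_mono (g := fun _ => c) h 0).trans ?_
  simp [lmarginal, Measure.pi_univ]

lemma measurable_conj_linearForm {m : ℕ} (v : Fin m → ℂ) :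
    Measurable fun x : Fin m → ℂ => ∑ k, (starRingEnd ℂ) (x k) * v k :=
  (continuous_finsetSum _ fun k _ =>
    (Complex.continuous_conj.comp (continuous_apply k)).mul continuous_const).measurable

/-- The negative moment of a linear form on a polydisc is controlled by any one of its
coefficients. -/
lemma exists_lintegral_linear_le (m : ℕ) {t : ℝ} (ht : 0 < t) (ht2 : t < 2) (R : ℝ) :
    ∃ K : ℝ≥0∞, K ≠ ⊤ ∧ ∀ (v : Fin m → ℂ) (i : Fin m),
      ∫⁻ x, ‖∑ k, (starRingEnd ℂ) (x k) * v k‖ₑ ^ (-t) ∂(Measure.pi fun _ => discMeasure R)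
        ≤ K * ‖v i‖ₑ ^ (-t) := by
  obtain ⟨K, -, hKt, hK⟩ := exists_lintegral_affine_le ht ht2 R
  refine ⟨K * discMeasure R Set.univ ^ (m - 1),
    ENNReal.mul_ne_top hKt (ENNReal.pow_ne_top (measure_ne_top _ _)), fun v i => ?_⟩
  refine (lintegral_pi_le_of_coord R _ ((measurable_conj_linearForm v).enorm.pow_const _) i (K * ‖v i‖ₑ ^ (-t)) fun x => ?_).trans
    (by rw [Fintype.card_fin, mul_right_comm])
  refine le_of_eq_of_le (lintegral_congr fun z => ?_)
    (hK (v i) (∑ k ∈ Finset.univ.erase i, (starRingEnd ℂ) (x k) * v k))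
  rw [← Finset.add_sum_erase _ _ (Finset.mem_univ i), Function.update_self]
  congr 3
  refine Finset.sum_congr rfl fun k hk => ?_
  rw [Function.update_of_ne (Finset.ne_of_mem_erase hk)]

lemma measurable_rankOneMeas {m1 m2 : ℕ} (X : EuclideanSpace ℂ (Fin m1 × Fin m2)) :
    Measurable fun p : (Fin m1 → ℂ) × (Fin m2 → ℂ) => rankOneMeas p.1 p.2 X := by
  unfold rankOneMeas
  fun_prop

/-- For fixed `a` the measurement is linear in `conj b`, with `j`-th coefficient a linear form in
`conj a` whose `i`-th coefficient is `X (i, j)`. -/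
lemma exists_lintegral_rankOneMeas_le (m1 m2 : ℕ) {t : ℝ} (ht : 0 < t) (ht2 : t < 2) (R : ℝ) :
    ∃ K : ℝ≥0∞, K ≠ ⊤ ∧ ∀ (X : EuclideanSpace ℂ (Fin m1 × Fin m2)) (i : Fin m1) (j : Fin m2),
      ∫⁻ p : (Fin m1 → ℂ) × (Fin m2 → ℂ), ‖rankOneMeas p.1 p.2 X‖ₑ ^ (-t)
          ∂((Measure.pi fun _ => discMeasure R).prod (Measure.pi fun _ => discMeasure R))
        ≤ K * ‖X (i, j)‖ₑ ^ (-t) := by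
  obtain ⟨K1, hK1t, hK1⟩ := exists_lintegral_linear_le m1 ht ht2 R
  obtain ⟨K2, hK2t, hK2⟩ := exists_lintegral_linear_le m2 ht ht2 R
  refine ⟨K2 * K1, ENNReal.mul_ne_top hK2t hK1t, fun X i j => ?_⟩
  rw [lintegral_prod _ ((measurable_rankOneMeas X).enorm.pow_const _).aemeasurable]
  calc _ ≤ ∫⁻ a : Fin m1 → ℂ, K2 * ‖∑ k, (starRingEnd ℂ) (a k) * X (k, j)‖ₑ ^ (-t)
          ∂(Measure.pi fun _ => discMeasure R) := by
        refine lintegral_mono fun a => ?_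
        refine le_of_eq_of_le (lintegral_congr fun b => ?_)
          (hK2 (fun l => ∑ k, (starRingEnd ℂ) (a k) * X (k, l)) j)
        rw [rankOneMeas, Finset.sum_comm]
        simp_rw [Finset.mul_sum, mul_comm]
    _ ≤ _ := by
        rw [lintegral_const_mul _ ((measurable_conj_linearForm fun k => X (k, j)).enorm.pow_const _),
          mul_assoc]
        gcongr
        exact hK1 (fun k => X (k, j)) i

lemma rpow_neg_le_rpow_neg {t : ℝ} (ht : 0 < t) {x y : ℝ≥0∞} (h : x ≤ y) :
    y ^ (-t) ≤ x ^ (-t) := by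
  rw [ENNReal.rpow_neg, ENNReal.rpow_neg]
  exact ENNReal.inv_le_inv.mpr (ENNReal.rpow_le_rpow h ht.le)

/-- Small-ball estimate: on tuples of entries bounded by `R`, the measurement of `X` has size at
most `δ` only on a set of volume `O(δ ^ t)`, for any fixed `t < 2`. -/
lemma measure_rankOneMeas_le (m1 m2 : ℕ) {t : ℝ} (ht : 0 < t) (ht2 : t < 2) (R : ℝ) :
    ∃ K : ℝ≥0∞, K ≠ ⊤ ∧ ∀ (X : EuclideanSpace ℂ (Fin m1 × Fin m2)) (i : Fin m1) (j : Fin m2)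
      (δ : ℝ≥0∞), δ ≠ 0 → δ ≠ ⊤ →
      volume {p : (Fin m1 → ℂ) × (Fin m2 → ℂ) | (∀ k, ‖p.1 k‖ ≤ R) ∧ (∀ l, ‖p.2 l‖ ≤ R) ∧
          ‖rankOneMeas p.1 p.2 X‖ₑ ≤ δ} ≤ K * ‖X (i, j)‖ₑ ^ (-t) * δ ^ t := by
  obtain ⟨K, hKt, hK⟩ := exists_lintegral_rankOneMeas_le m1 m2 ht ht2 R
  refine ⟨K, hKt, fun X i j δ hδ0 hδt => ?_⟩
  set μ : Measure ((Fin m1 → ℂ) × (Fin m2 → ℂ)) :=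
    (Measure.pi fun _ => discMeasure R).prod (Measure.pi fun _ => discMeasure R) with hμ
  have hμ' : μ = volume.restrict
      ((Set.univ.pi fun _ => Metric.closedBall (0 : ℂ) R) ×ˢ
        (Set.univ.pi fun _ => Metric.closedBall (0 : ℂ) R)) := by
    rw [hμ, Measure.volume_eq_prod, ← Measure.prod_restrict, volume_pi, volume_pi,
      Measure.restrict_pi_pi, Measure.restrict_pi_pi]
    rfl
  have h1 : volume {p : (Fin m1 → ℂ) × (Fin m2 → ℂ) | (∀ k, ‖p.1 k‖ ≤ R) ∧
      (∀ l, ‖p.2 l‖ ≤ R) ∧ ‖rankOneMeas p.1 p.2 X‖ₑ ≤ δ} ≤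
      μ {p | δ ^ (-t) ≤ ‖rankOneMeas p.1 p.2 X‖ₑ ^ (-t)} := by
    rw [hμ', Measure.restrict_apply']
    · refine measure_mono fun p hp => ⟨?_, ?_, ?_⟩
      · exact rpow_neg_le_rpow_neg ht hp.2.2
      · simpa [Set.mem_pi] using hp.1
      · simpa [Set.mem_pi] using hp.2.1
    · exact (MeasurableSet.univ_pi fun _ => measurableSet_closedBall).prod
        (MeasurableSet.univ_pi fun _ => measurableSet_closedBall)
  -- Markov's inequality for the negative power of the measurement.
  have h2 := (mul_meas_ge_le_lintegral (μ := μ)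
    ((measurable_rankOneMeas X).enorm.pow_const (-t)) (δ ^ (-t))).trans (hK X i j)
  have h3 : δ ^ t * δ ^ (-t) = 1 := by
    rw [← ENNReal.rpow_add _ _ hδ0 hδt]; simp
  refine h1.trans ?_
  calc _ = δ ^ t * (δ ^ (-t) * μ {p | δ ^ (-t) ≤ ‖rankOneMeas p.1 p.2 X‖ₑ ^ (-t)}) := by
        rw [← mul_assoc, h3, one_mul]
    _ ≤ δ ^ t * (K * ‖X (i, j)‖ₑ ^ (-t)) := by gcongr
    _ = _ := mul_comm _ _

lemma rankOneMeas_sub {m1 m2 : ℕ} (a : Fin m1 → ℂ) (b : Fin m2 → ℂ)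
    (M M' : EuclideanSpace ℂ (Fin m1 × Fin m2)) :
    rankOneMeas a b (M - M') = rankOneMeas a b M - rankOneMeas a b M' := by
  simp only [rankOneMeas, ← Finset.sum_sub_distrib, PiLp.sub_apply]
  refine Finset.sum_congr rfl fun i _ => Finset.sum_congr rfl fun j _ => by ring

lemma norm_rankOneMeas_le {m1 m2 : ℕ} {R : ℝ} (a : Fin m1 → ℂ) (b : Fin m2 → ℂ)
    (ha : ∀ k, ‖a k‖ ≤ R) (hb : ∀ l, ‖b l‖ ≤ R) (X : EuclideanSpace ℂ (Fin m1 × Fin m2)) :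
    ‖rankOneMeas a b X‖ ≤ m1 * m2 * R ^ 2 * ‖X‖ := by
  calc ‖rankOneMeas a b X‖ ≤ ∑ i : Fin m1, ∑ j : Fin m2, R ^ 2 * ‖X‖ := by
        refine norm_sum_le_of_le _ fun i _ => norm_sum_le_of_le _ fun j _ => ?_
        rw [norm_mul, norm_mul, RCLike.norm_conj, RCLike.norm_conj]
        have hR : 0 ≤ R := (norm_nonneg _).trans (ha i)
        have h1 := PiLp.norm_apply_le X (i, j)
        calc ‖a i‖ * ‖X (i, j)‖ * ‖b j‖ ≤ R * ‖X‖ * R := by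
              gcongr
              · exact ha i
              · exact hb j
          _ = _ := by ring
    _ = _ := by simp; ring

/-! ### Covering numbers -/

/-- The number of balls of radius `R / 2 ^ k` needed to cover a bounded set grows at most
exponentially in `k`: the unit ball is covered by `K` balls of half its radius, and this
covering is rescaled and iterated. -/
lemma exists_cover_geometric {E : Type*} [NormedAddCommGroup E] [NormedSpace ℝ E] [ProperSpace E]
    {Ω : Set E} (hbd : Bornology.IsBounded Ω) :
    ∃ (K : ℕ) (R : ℝ), 0 < R ∧ ∀ k : ℕ, ∃ C : Finset E, C.card ≤ K ^ k ∧
      Ω ⊆ ⋃ c ∈ C, Metric.closedBall c (R / 2 ^ k) := by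
  classical
  obtain ⟨T, -, hTfin, hT⟩ := finite_cover_balls_of_compact
    (isCompact_closedBall (0 : E) 1) (show (0 : ℝ) < 1 / 2 by norm_num)
  obtain ⟨R, hR, hΩ⟩ := hbd.subset_closedBall_lt 0 0
  refine ⟨hTfin.toFinset.card, R, hR, fun k => ?_⟩
  induction k with
  | zero => exact ⟨{0}, by simp, by simpa using hΩ⟩
  | succ k ih =>
    obtain ⟨C, hC, hcov⟩ := ih
    refine ⟨Finset.image₂ (fun c x => c + (R / 2 ^ k) • x) C hTfin.toFinset,
      (Finset.card_image₂_le _ _ _).trans ?_, fun y hy => ?_⟩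
    · rw [pow_succ]; gcongr
    · obtain ⟨c, hc, hyc⟩ := Set.mem_iUnion₂.mp (hcov hy)
      have hr : 0 < R / 2 ^ k := by positivity
      have hz : (R / 2 ^ k)⁻¹ • (y - c) ∈ Metric.closedBall (0 : E) 1 := by
        rw [mem_closedBall_zero_iff, norm_smul, norm_inv, Real.norm_of_nonneg hr.le,
          inv_mul_le_iff₀ hr, mul_one, ← dist_eq_norm]
        exact hyc
      obtain ⟨x, hx, hzx⟩ := Set.mem_iUnion₂.mp (hT hz)
      refine Set.mem_iUnion₂.mpr ⟨_, Finset.mem_image₂_of_mem hc (hTfin.mem_toFinset.mpr hx), ?_⟩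
      rw [mem_ball_iff_norm] at hzx
      rw [mem_closedBall_iff_norm]
      have e : y - (c + (R / 2 ^ k) • x) = (R / 2 ^ k) • ((R / 2 ^ k)⁻¹ • (y - c) - x) := by
        rw [smul_sub, smul_inv_smul₀ hr.ne']; abel
      rw [e, norm_smul, Real.norm_of_nonneg hr.le, pow_succ]
      calc R / 2 ^ k * ‖(R / 2 ^ k)⁻¹ • (y - c) - x‖ ≤ R / 2 ^ k * (1 / 2) := by gcongr
        _ = _ := by field_simp

/-- The infimum defining the covering number is attained, rather than being the junk value
`sInf ∅ = 0`. -/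
lemma exists_card_eq_coveringNumber {E : Type*} [PseudoMetricSpace E] [ProperSpace E]
    {Ω : Set E} (hbd : Bornology.IsBounded Ω) {ρ : ℝ} (hρ : 0 < ρ) :
    ∃ C : Finset E, C.card = coveringNumber Ω ρ ∧ Ω ⊆ ⋃ c ∈ C, Metric.closedBall c ρ := by
  refine Nat.sInf_mem (s := {k : ℕ | ∃ C : Finset E, C.card = k ∧
    Ω ⊆ ⋃ c ∈ C, Metric.closedBall c ρ}) ?_
  obtain ⟨T, -, hTfin, hT⟩ := exists_finite_cover_balls_of_isCompact_closure
    hbd.isCompact_closure hρ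
  refine ⟨_, hTfin.toFinset, rfl, hT.trans ?_⟩
  simp only [Set.Finite.mem_toFinset]
  exact Set.iUnion₂_mono fun c _ => Metric.ball_subset_closedBall

/-- The quotient defining the lower Minkowski dimension does not tend to infinity, so that its
real-valued `liminf` is not a junk value. -/
lemma isCoboundedUnder_coveringNumber {E : Type*} [NormedAddCommGroup E] [NormedSpace ℝ E]
    [ProperSpace E] {Ω : Set E} (hbd : Bornology.IsBounded Ω) :
    (nhdsWithin (0 : ℝ) (Set.Ioi 0)).IsCoboundedUnder (· ≥ ·)
      (fun ρ : ℝ => Real.log (coveringNumber Ω ρ) / Real.log (1 / ρ)) := by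
  obtain ⟨K, R, hR, hK⟩ := exists_cover_geometric hbd
  have hlim : Tendsto (fun k : ℕ => R / 2 ^ k) atTop (nhdsWithin 0 (Set.Ioi 0)) := by
    refine tendsto_nhdsWithin_iff.mpr ⟨?_, Eventually.of_forall fun k => by
      simp only [Set.mem_Ioi]; positivity⟩
    have := (tendsto_pow_atTop_nhds_zero_of_lt_one (r := (1 / 2 : ℝ))
      (by norm_num) (by norm_num)).const_mul R
    simpa [div_eq_mul_inv] using this
  refine IsCoboundedUnder.of_frequently_le (a := 2 * Real.log K / Real.log 2)
    (hlim.frequently (Eventually.frequently ?_))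
  have hlog2 : 0 < Real.log 2 := Real.log_pos (by norm_num)
  have hev : ∀ᶠ k : ℕ in atTop, 2 * Real.log R / Real.log 2 ≤ k :=
    tendsto_natCast_atTop_atTop.eventually_ge_atTop _
  filter_upwards [hev, eventually_ge_atTop 1] with k hk hk1
  obtain ⟨C, hC, hcov⟩ := hK k
  have hN : coveringNumber Ω (R / 2 ^ k) ≤ K ^ k :=
    (Nat.sInf_le ⟨C, rfl, hcov⟩ : coveringNumber Ω (R / 2 ^ k) ≤ C.card).trans hC
  have hk1' : (1 : ℝ) ≤ k := by exact_mod_cast hk1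
  have hnum : Real.log (coveringNumber Ω (R / 2 ^ k)) ≤ k * Real.log K := by
    rcases Nat.eq_zero_or_pos (coveringNumber Ω (R / 2 ^ k)) with h0 | h0
    · rw [h0]
      simpa using mul_nonneg (by positivity) (Real.log_natCast_nonneg K)
    · rw [← Real.log_pow]
      exact Real.log_le_log (by exact_mod_cast h0) (by exact_mod_cast hN)
  have hden : k * Real.log 2 / 2 ≤ Real.log (1 / (R / 2 ^ k)) := by
    rw [one_div_div, Real.log_div (by positivity) hR.ne', Real.log_pow]
    rw [div_le_iff₀ hlog2] at hk
    linarith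
  have hden0 : 0 < k * Real.log 2 / 2 := by positivity
  have hK0 : 0 ≤ Real.log K := Real.log_natCast_nonneg K
  calc _ ≤ (k * Real.log K) / (k * Real.log 2 / 2) := by gcongr
    _ = _ := by field_simp

lemma frequently_coveringNumber_le {E : Type*} [NormedAddCommGroup E] [NormedSpace ℝ E]
    [ProperSpace E] {Ω : Set E} (hbd : Bornology.IsBounded Ω) {s : ℝ}
    (hs : lowerMinkowskiDim Ω < s) :
    ∃ᶠ ρ : ℝ in nhdsWithin 0 (Set.Ioi 0), 0 < ρ ∧ (coveringNumber Ω ρ : ℝ) ≤ ρ ^ (-s) := by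
  have h := frequently_lt_of_liminf_lt (isCoboundedUnder_coveringNumber hbd) hs
  refine (h.and_eventually (Ioo_mem_nhdsGT one_pos)).mono ?_
  rintro ρ ⟨hlt, hρ0, hρ1⟩
  refine ⟨hρ0, ?_⟩
  rcases Nat.eq_zero_or_pos (coveringNumber Ω ρ) with h0 | h0
  · rw [h0]; simp only [Nat.cast_zero]; positivity
  · have hl : 0 < Real.log (1 / ρ) := Real.log_pos (by rw [lt_div_iff₀ hρ0]; linarith)
    rw [div_lt_iff₀ hl] at hlt
    rw [← Real.log_le_log_iff (by exact_mod_cast h0) (by positivity), Real.log_rpow hρ0]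
    rw [one_div, Real.log_inv] at hlt
    linarith

/-! ### The exceptional set -/

/-- Tuples with entries bounded by `R` whose measurements fail to separate `M0` from some
`M ∈ Ω` differing from it by at least `c` at the entry `(i, j)` form a null set. -/
lemma volume_bad_eq_zero {m1 m2 n : ℕ} (hn : 0 < n)
    {Ω : Set (EuclideanSpace ℂ (Fin m1 × Fin m2))} (hbd : Bornology.IsBounded Ω)
    (M0 : EuclideanSpace ℂ (Fin m1 × Fin m2)) (hdim : lowerMinkowskiDim Ω < 2 * n)
    (i : Fin m1) (j : Fin m2) {c : ℝ} (hc : 0 < c) (R : ℝ) :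
    volume {ab : (Fin n → Fin m1 → ℂ) × (Fin n → Fin m2 → ℂ) |
      (∀ q k, ‖ab.1 q k‖ ≤ R) ∧ (∀ q l, ‖ab.2 q l‖ ≤ R) ∧
      ∃ M ∈ Ω, c ≤ ‖(M - M0) (i, j)‖ ∧
        ∀ q, rankOneMeas (ab.1 q) (ab.2 q) (M - M0) = 0} = 0 := by
  set E := {ab : (Fin n → Fin m1 → ℂ) × (Fin n → Fin m2 → ℂ) |
      (∀ q k, ‖ab.1 q k‖ ≤ R) ∧ (∀ q l, ‖ab.2 q l‖ ≤ R) ∧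
      ∃ M ∈ Ω, c ≤ ‖(M - M0) (i, j)‖ ∧
        ∀ q, rankOneMeas (ab.1 q) (ab.2 q) (M - M0) = 0} with hE
  have hn' : (0 : ℝ) < n := by exact_mod_cast hn
  -- Exponents with `dim Ω < s < n * t` and `t < 2`: there are at most `ρ ^ (-s)` balls, each
  -- contributing `O(ρ ^ (n * t))`.
  obtain ⟨s, hs1, hs2⟩ := exists_between hdim
  obtain ⟨t, ht1, ht2⟩ : ∃ t, max 0 (s / n) < t ∧ t < 2 :=
    exists_between (max_lt two_pos (by rwa [div_lt_iff₀ hn']))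
  have ht : 0 < t := (le_max_left _ _).trans_lt ht1
  have hst : s < t * n := by
    rw [← div_lt_iff₀ hn']; exact (le_max_right _ _).trans_lt ht1
  obtain ⟨K, hKt, hK⟩ := measure_rankOneMeas_le m1 m2 ht ht2 R
  -- Measurements of two points of one `ρ`-ball differ by at most `D * ρ`; the summand `1` keeps
  -- `D` positive.
  set D : ℝ := m1 * m2 * R ^ 2 * 2 + 1 with hD
  have hD0 : 0 < D := by positivity
  set κ : ℝ≥0∞ := K * ENNReal.ofReal c ^ (-t) * ENNReal.ofReal D ^ t with hκ
  have hκt : κ ≠ ⊤ := by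
    refine ENNReal.mul_ne_top (ENNReal.mul_ne_top hKt ?_) ?_
    · rw [ENNReal.ofReal_rpow_of_pos hc]; exact ENNReal.ofReal_ne_top
    · exact ENNReal.rpow_ne_top_of_nonneg ht.le ENNReal.ofReal_ne_top
  have bound : ∀ ρ : ℝ, 0 < ρ → (coveringNumber Ω ρ : ℝ) ≤ ρ ^ (-s) →
      volume E ≤ κ ^ n * ENNReal.ofReal (ρ ^ (t * n - s)) := by
    intro ρ hρ hN
    obtain ⟨C, hCcard, hC⟩ := exists_card_eq_coveringNumber hbd hρ
    -- The centre `x` need not satisfy the entry bound, so a point `M'` of `Ω` in the ball that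
    -- does is used in its place; if there is none, the ball contributes nothing.
    have hT : ∀ x : EuclideanSpace ℂ (Fin m1 × Fin m2),
        ∃ T : Set ((Fin m1 → ℂ) × (Fin m2 → ℂ)),
          volume T ≤ κ * ENNReal.ofReal (ρ ^ t) ∧
          ∀ M ∈ Ω, M ∈ Metric.closedBall x ρ → c ≤ ‖(M - M0) (i, j)‖ →
            ∀ p : (Fin m1 → ℂ) × (Fin m2 → ℂ), (∀ k, ‖p.1 k‖ ≤ R) → (∀ l, ‖p.2 l‖ ≤ R) →
              rankOneMeas p.1 p.2 (M - M0) = 0 → p ∈ T := by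
      intro x
      by_cases hx : ∃ M' ∈ Ω, M' ∈ Metric.closedBall x ρ ∧ c ≤ ‖(M' - M0) (i, j)‖
      · obtain ⟨M', -, hM'x, hM'c⟩ := hx
        refine ⟨_, (hK (M' - M0) i j (ENNReal.ofReal (D * ρ)) ?_ ENNReal.ofReal_ne_top).trans ?_,
          fun M _ hMx _ p hp1 hp2 hp0 => ⟨hp1, hp2, ?_⟩⟩
        · simpa using mul_pos hD0 hρ
        · have hentry : ‖(M' - M0) (i, j)‖ₑ ^ (-t) ≤ ENNReal.ofReal c ^ (-t) := by
            refine rpow_neg_le_rpow_neg ht ?_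
            rw [← ofReal_norm]
            exact ENNReal.ofReal_le_ofReal hM'c
          rw [ENNReal.ofReal_mul hD0.le, ENNReal.mul_rpow_of_nonneg _ _ ht.le, ← mul_assoc,
            ENNReal.ofReal_rpow_of_pos hρ, hκ]
          exact mul_le_mul' (mul_le_mul' (mul_le_mul' le_rfl hentry) le_rfl) le_rfl
        · rw [← ofReal_norm]
          refine ENNReal.ofReal_le_ofReal ?_
          have e : rankOneMeas p.1 p.2 (M' - M0) = rankOneMeas p.1 p.2 (M' - M) := by
            rw [rankOneMeas_sub] at hp0 ⊢
            rw [rankOneMeas_sub, sub_eq_zero.mp hp0]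
          have hdist : ‖M' - M‖ ≤ 2 * ρ := by
            rw [← dist_eq_norm]
            have h1 := Metric.mem_closedBall.mp hM'x
            have h2 := Metric.mem_closedBall'.mp hMx
            linarith [dist_triangle M' x M]
          rw [e]
          calc _ ≤ m1 * m2 * R ^ 2 * ‖M' - M‖ := norm_rankOneMeas_le _ _ hp1 hp2 _
            _ ≤ m1 * m2 * R ^ 2 * (2 * ρ) := by gcongr
            _ ≤ D * ρ := by rw [hD]; nlinarith
      · exact ⟨∅, by simp, fun M hM hMx hMc => absurd ⟨M, hM, hMx, hMc⟩ hx⟩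
    have : SigmaFinite (volume : Measure ((Fin m1 → ℂ) × (Fin m2 → ℂ))) := by
      rw [Measure.volume_eq_prod]; infer_instance
    choose T hTvol hTmem using hT
    have hmp := volume_measurePreserving_arrowProdEquivProdArrow
      (Fin m1 → ℂ) (Fin m2 → ℂ) (Fin n)
    rw [← hmp.measure_preimage_equiv]
    have hsub : (MeasurableEquiv.arrowProdEquivProdArrow (Fin m1 → ℂ) (Fin m2 → ℂ) (Fin n)) ⁻¹' E
        ⊆ ⋃ x ∈ C, Set.univ.pi fun _ : Fin n => T x := by
      rintro f ⟨hf1, hf2, M, hM, hMc, hMz⟩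
      obtain ⟨x, hx, hMx⟩ := Set.mem_iUnion₂.mp (hC hM)
      exact Set.mem_iUnion₂.mpr ⟨x, hx, fun q _ =>
        hTmem x M hM hMx hMc (f q) (hf1 q) (hf2 q) (hMz q)⟩
    calc _ ≤ volume (⋃ x ∈ C, Set.univ.pi fun _ : Fin n => T x) := measure_mono hsub
      _ ≤ ∑ x ∈ C, volume (Set.univ.pi fun _ : Fin n => T x) := measure_biUnion_finset_le _ _
      _ ≤ ∑ x ∈ C, (κ * ENNReal.ofReal (ρ ^ t)) ^ n := by
          refine Finset.sum_le_sum fun x _ => ?_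
          rw [volume_pi, Measure.pi_pi]
          simp only [Finset.prod_const, Finset.card_univ, Fintype.card_fin]
          gcongr
          exact hTvol x
      _ = ENNReal.ofReal (coveringNumber Ω ρ) * (κ * ENNReal.ofReal (ρ ^ t)) ^ n := by
          rw [Finset.sum_const, hCcard, nsmul_eq_mul, ENNReal.ofReal_natCast]
      _ ≤ ENNReal.ofReal (ρ ^ (-s)) * (κ * ENNReal.ofReal (ρ ^ t)) ^ n := by gcongr
      _ = κ ^ n * ENNReal.ofReal (ρ ^ (t * n - s)) := by
          rw [mul_pow, ← ENNReal.ofReal_pow (by positivity), ← Real.rpow_natCast,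
            ← Real.rpow_mul hρ.le, mul_left_comm, ← ENNReal.ofReal_mul (by positivity),
            ← Real.rpow_add hρ, neg_add_eq_sub]
  have hlim : Tendsto (fun ρ : ℝ => κ ^ n * ENNReal.ofReal (ρ ^ (t * n - s)))
      (nhdsWithin 0 (Set.Ioi 0)) (nhds 0) := by
    have h1 : Tendsto (fun ρ : ℝ => ρ ^ (t * n - s)) (nhdsWithin 0 (Set.Ioi 0)) (nhds 0) := by
      have := (Real.continuousAt_rpow_const 0 (t * n - s) (Or.inr (by linarith))).tendsto
      rw [Real.zero_rpow (by linarith)] at this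
      exact this.mono_left nhdsWithin_le_nhds
    have h2 := ENNReal.Tendsto.const_mul (a := κ ^ n) (ENNReal.tendsto_ofReal h1)
      (Or.inr (ENNReal.pow_ne_top hκt))
    simpa using h2
  exact le_antisymm (ge_of_tendsto_of_frequently hlim
    ((frequently_coveringNumber_le hbd hs1).mono fun ρ h => bound ρ h.1 h.2)) zero_le

/-- Weak identifiability of bounded-set matrix recovery from rank-one measurements:
if `2n` exceeds the lower Minkowski dimension of a nonempty bounded `Ω ⊆ ℂ^{m1×m2}` and
`M0 ∈ Ω`, then for Lebesgue-almost all tuples `(a_j, b_j)`, any `M ∈ Ω` with the same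
measurements as `M0` equals `M0`. -/
theorem weak_identifiability_matrix_recovery (m1 m2 n : ℕ) (hn : 0 < n)
    (Ω : Set (EuclideanSpace ℂ (Fin m1 × Fin m2))) (hne : Ω.Nonempty)
    (hbd : Bornology.IsBounded Ω)
    (M0 : EuclideanSpace ℂ (Fin m1 × Fin m2)) (hM0 : M0 ∈ Ω)
    (hdim : lowerMinkowskiDim Ω < 2 * n) :
    ∀ᵐ ab : (Fin n → Fin m1 → ℂ) × (Fin n → Fin m2 → ℂ),
      ∀ M ∈ Ω, (∀ j : Fin n, rankOneMeas (ab.1 j) (ab.2 j) M =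
          rankOneMeas (ab.1 j) (ab.2 j) M0) → M = M0 := by
  -- The general case is a countable union over the entry `(i, j)`, the gap `1 / (L + 1)` and `R`.
  have hall : ∀ᵐ ab : (Fin n → Fin m1 → ℂ) × (Fin n → Fin m2 → ℂ),
      ∀ (i : Fin m1) (j : Fin m2) (L R : ℕ), ab ∉
        {ab : (Fin n → Fin m1 → ℂ) × (Fin n → Fin m2 → ℂ) |
          (∀ q k, ‖ab.1 q k‖ ≤ (R : ℝ)) ∧ (∀ q l, ‖ab.2 q l‖ ≤ (R : ℝ)) ∧
          ∃ M ∈ Ω, 1 / ((L : ℝ) + 1) ≤ ‖(M - M0) (i, j)‖ ∧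
            ∀ q, rankOneMeas (ab.1 q) (ab.2 q) (M - M0) = 0} := by
    simp only [ae_all_iff]
    intro i j L R
    exact measure_eq_zero_iff_ae_notMem.mp
      (volume_bad_eq_zero hn hbd M0 hdim i j (by positivity) R)
  filter_upwards [hall] with ab hab M hM hmeas
  by_contra hne'
  obtain ⟨⟨i, j⟩, hij⟩ : ∃ ij, (M - M0) ij ≠ 0 := by
    by_contra! h
    exact hne' (sub_eq_zero.mp (by ext ij; exact h ij))
  obtain ⟨L, hL⟩ := exists_nat_one_div_lt (norm_pos_iff.mpr hij)
  obtain ⟨R, hR⟩ := exists_nat_ge (max ‖ab.1‖ ‖ab.2‖)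
  refine hab i j L R ⟨fun q k => ?_, fun q l => ?_, M, hM, hL.le, fun q => ?_⟩
  · exact ((norm_le_pi_norm _ k).trans (norm_le_pi_norm _ q)).trans ((le_max_left _ _).trans hR)
  · exact ((norm_le_pi_norm _ l).trans (norm_le_pi_norm _ q)).trans ((le_max_right _ _).trans hR)
  · rw [rankOneMeas_sub, hmeas q, sub_self]
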